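/- Let K, T ⊂ ℝ^{2n} be centrally symmetric convex bodies (K = −K, T = −T) and let x ∈ ℝ^{2n} be such that K ∩ (x+T) has nonempty interior. Then K ∩ T has nonempty interior and c(K ∩ (x+T)) ≤ c(K ∩ T). -/

import Mathlib

open MeasureTheory Real Set Filter intervalIntegral Metric
open scoped InnerProductSpace Topology Pointwise

noncomputable section

/-- The phase space `ℝ^{2n}`. -/
abbrev E (n : ℕ) := EuclideanSpace ℝ (Fin (2 * n))

/-- The standard complex structure `J` on `ℝ^{2n}`, given in coordinates
`(x₁,y₁,…,xₙ,yₙ)` by `J(x₁,y₁,…,xₙ,yₙ) = (−y₁,x₁,…,−yₙ,xₙ)`. -/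
def Jmap (n : ℕ) (v : E n) : E n := WithLp.toLp 2 fun i =>
  if _h : i.val % 2 = 0 then -v ⟨i.val + 1, by have := i.isLt; omega⟩
  else v ⟨i.val - 1, by have := i.isLt; omega⟩

/-- The support function `h_K(u) = sup_{x ∈ K} ⟨x, u⟩`. -/
def suppFn (n : ℕ) (K : Set (E n)) (u : E n) : ℝ :=
  sSup ((fun x => ⟪x, u⟫_ℝ) '' K)

/-- A convex body: a compact convex set with nonempty interior. -/
def IsConvexBody (n : ℕ) (K : Set (E n)) : Prop :=
  IsCompact K ∧ Convex ℝ K ∧ (interior K).Nonempty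

/-- Membership in the loop space `𝓔_p`: the pair `(z, dz)` represents an absolutely
continuous `2π`-periodic loop `z` with derivative `dz ∈ L^p([0,2π])`, mean zero and
normalized action `(1/2)∫₀^{2π} ⟨J z, ż⟩ = 1`. -/
def InE (n : ℕ) (p : ℝ) (z dz : ℝ → E n) : Prop :=
  Function.Periodic z (2 * π) ∧
  (∀ a b : ℝ, IntervalIntegrable dz volume a b) ∧
  (∀ t, z t = z 0 + ∫ s in (0:ℝ)..t, dz s) ∧
  MemLp dz (ENNReal.ofReal p) (volume.restrict (Set.Ioc (0:ℝ) (2 * π))) ∧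
  (∫ t in (0:ℝ)..(2 * π), z t) = 0 ∧
  (1 / 2) * ∫ t in (0:ℝ)..(2 * π), ⟪Jmap n (z t), dz t⟫_ℝ = 1

/-- The (Ekeland–Hofer–Zehnder) capacity of a convex body,
`c(S) = (π · inf_{z ∈ 𝓔₂} (1/2π) ∫₀^{2π} h_S(ż(t)) dt)²`. -/
def capacity (n : ℕ) (S : Set (E n)) : ℝ :=
  (π * sInf { r : ℝ | ∃ z dz : ℝ → E n, InE n 2 z dz ∧
      r = (1 / (2 * π)) * ∫ t in (0:ℝ)..(2 * π), suppFn n S (dz t) }) ^ 2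

/-- The action `𝒜(γ) = (1/2) ∫₀^{T₀} ⟨−Jγ̇(t), γ(t)⟩ dt` of a `T₀`-periodic curve. -/
def action (n : ℕ) (γ : ℝ → E n) (T₀ : ℝ) : ℝ :=
  (1 / 2) * ∫ t in (0:ℝ)..T₀, ⟪-Jmap n (deriv γ t), γ t⟫_ℝ

/-- A closed characteristic on `∂K`: a nonconstant `T₀`-periodic `C¹` curve lying on
`∂K` satisfying `γ̇ = d·J∇F(γ)` for some `d > 0`, where `F = ‖·‖_K²`. -/
def IsClosedCharacteristic (n : ℕ) (K : Set (E n)) (γ : ℝ → E n) (T₀ : ℝ) : Prop :=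
  0 < T₀ ∧ Function.Periodic γ T₀ ∧ ContDiff ℝ 1 γ ∧ (∃ s t, γ s ≠ γ t) ∧
  (∀ t, γ t ∈ frontier K) ∧
  ∃ d : ℝ, 0 < d ∧ ∀ t, deriv γ t = d • Jmap n (gradient (fun x => gauge K x ^ 2) (γ t))

/-- A capacity carrier of `K`: a closed characteristic on `∂K` of minimal action. -/
def IsCapacityCarrier (n : ℕ) (K : Set (E n)) (γ : ℝ → E n) (T₀ : ℝ) : Prop :=
  IsClosedCharacteristic n K γ T₀ ∧
  ∀ γ' T₀', IsClosedCharacteristic n K γ' T₀' → action n γ T₀ ≤ action n γ' T₀'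

/-- The minimal action of a closed characteristic on `∂K`. -/
def minAction (n : ℕ) (K : Set (E n)) : ℝ :=
  sInf { a : ℝ | ∃ γ T₀, IsClosedCharacteristic n K γ T₀ ∧ a = action n γ T₀ }

/-- `K` has smooth boundary: its gauge function is `C¹` away from the origin. -/
def HasSmoothBoundary (n : ℕ) (K : Set (E n)) : Prop :=
  ContDiffOn ℝ 1 (gauge K) {(0 : E n)}ᶜ

/-- The `p`-sum `K +ₚ T` of Firey: the convex body with support function
`(h_K^p + h_T^p)^{1/p}`. -/
def pSum (n : ℕ) (p : ℝ) (K T : Set (E n)) : Set (E n) :=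
  { x | ∀ u, ⟪x, u⟫_ℝ ≤ (suppFn n K u ^ p + suppFn n T u ^ p) ^ (1 / p) }

/-- The polar body `T° = {x : ⟨x,y⟩ ≤ 1 for all y ∈ T}`. -/
def polarBody (n : ℕ) (T : Set (E n)) : Set (E n) :=
  { x | ∀ y ∈ T, ⟪x, y⟫_ℝ ≤ 1 }

/-- The length `∫₀^{T₀} ‖γ̇(t)‖_B dt` of a curve measured with the gauge of `B`. -/
def lengthIn (n : ℕ) (B : Set (E n)) (γ : ℝ → E n) (T₀ : ℝ) : ℝ :=
  ∫ t in (0:ℝ)..T₀, gauge B (deriv γ t)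

/-- Critical point of the functional `I_p(z) = ∫₀^{2π} h_K^p(ż(t)) dt` on `𝓔_p`. -/
def IsCriticalPoint (n : ℕ) (p : ℝ) (K : Set (E n)) (z dz : ℝ → E n) : Prop :=
  ∀ ξ dξ : ℝ → E n,
    Function.Periodic ξ (2 * π) →
    (∀ a b : ℝ, IntervalIntegrable dξ volume a b) →
    (∀ t, ξ t = ξ 0 + ∫ s in (0:ℝ)..t, dξ s) →
    MemLp dξ (ENNReal.ofReal p) (volume.restrict (Set.Ioc (0:ℝ) (2 * π))) →
    (∫ t in (0:ℝ)..(2 * π), ξ t) = 0 →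
    (∫ t in (0:ℝ)..(2 * π), ⟪ξ t, Jmap n (dz t)⟫_ℝ) = 0 →
    (∫ t in (0:ℝ)..(2 * π), ⟪gradient (fun u => suppFn n K u ^ p) (dz t), dξ t⟫_ℝ) = 0

/-- The rotation-invariant probability measure on the unit sphere of `ℝ^{2n}`. -/
def sphereMeasure (n : ℕ) : Measure (sphere (0 : E n) 1) :=
  ((volume : Measure (E n)).toSphere Set.univ)⁻¹ • (volume : Measure (E n)).toSphere

/-- The mean width parameter `M*(K) = ∫_{S^{2n-1}} h_K dσ`. -/
def meanWidth (n : ℕ) (K : Set (E n)) : ℝ :=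
  ∫ x : sphere (0 : E n) 1, suppFn n K (x : E n) ∂(sphereMeasure n)

theorem suppFn_bdd {n : ℕ} {S : Set (E n)} (hS : IsCompact S) (u : E n) :
    BddAbove ((fun x => ⟪x, u⟫_ℝ) '' S) :=
  (hS.image (by fun_prop)).bddAbove

theorem le_suppFn {n : ℕ} {S : Set (E n)} (hS : IsCompact S) (u : E n) {a : E n} (ha : a ∈ S) :
    ⟪a, u⟫_ℝ ≤ suppFn n S u :=
  le_csSup (suppFn_bdd hS u) ⟨a, ha, rfl⟩

theorem suppFn_le {n : ℕ} {S : Set (E n)} (hne : S.Nonempty) (u : E n) {c : ℝ}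
    (h : ∀ a ∈ S, ⟪a, u⟫_ℝ ≤ c) : suppFn n S u ≤ c := by
  refine csSup_le (hne.image _) ?_
  rintro _ ⟨a, ha, rfl⟩
  exact h a ha

theorem suppFn_lip {n : ℕ} {S : Set (E n)} (hS : IsCompact S) (hne : S.Nonempty) :
    ∃ C : NNReal, LipschitzWith C (suppFn n S) := by
  obtain ⟨R, hR0, hR⟩ := hS.isBounded.exists_pos_norm_le
  refine ⟨R.toNNReal, LipschitzWith.of_le_add_mul _ ?_⟩
  intro u v
  refine suppFn_le hne u fun a ha => ?_
  have h1 := le_suppFn hS v ha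
  have h2 : ⟪a, u⟫_ℝ = ⟪a, v⟫_ℝ + ⟪a, u - v⟫_ℝ := by rw [inner_sub_right]; ring
  have h3 : ⟪a, u - v⟫_ℝ ≤ R * dist u v := by
    rw [dist_eq_norm]
    exact (real_inner_le_norm _ _).trans (mul_le_mul_of_nonneg_right (hR a ha) (norm_nonneg _))
  rw [Real.coe_toNNReal R hR0.le]
  linarith

theorem suppFn_zero {n : ℕ} {S : Set (E n)} (hne : S.Nonempty) : suppFn n S 0 = 0 := by
  unfold suppFn
  simp [hne.image_const]

theorem suppFn_integrable {n : ℕ} {S : Set (E n)} (hS : IsCompact S) (hne : S.Nonempty)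
    {f : ℝ → E n} {a b : ℝ} (hf : IntervalIntegrable f volume a b) :
    IntervalIntegrable (fun t => suppFn n S (f t)) volume a b := by
  obtain ⟨C, hC⟩ := suppFn_lip hS hne
  have key : ∀ μ : Measure ℝ, Integrable f μ → Integrable (fun t => suppFn n S (f t)) μ := by
    intro μ h
    have := hC.comp_memLp (suppFn_zero hne) (memLp_one_iff_integrable.2 h)
    exact memLp_one_iff_integrable.1 this
  exact ⟨key _ hf.1, key _ hf.2⟩

theorem Jmap_neg (n : ℕ) (v : E n) : Jmap n (-v) = -Jmap n v := by
  ext i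
  simp only [Jmap, PiLp.neg_apply]
  split_ifs <;> simp

theorem InE_neg {n : ℕ} {p : ℝ} {z dz : ℝ → E n} (h : InE n p z dz) :
    InE n p (fun t => -z t) (fun t => -dz t) := by
  obtain ⟨h1, h2, h3, h4, h5, h6⟩ := h
  refine ⟨fun t => by simp [h1 t], fun a b => (h2 a b).neg, fun t => ?_, h4.neg, ?_, ?_⟩
  · show -z t = -z 0 + ∫ s in (0:ℝ)..t, -dz s
    rw [intervalIntegral.integral_neg, h3 t]; abel
  · rw [intervalIntegral.integral_neg, h5, neg_zero]
  · simpa [Jmap_neg] using h6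

theorem integral_suppFn_nonneg {n : ℕ} {S : Set (E n)} (hS : IsCompact S) (hne : S.Nonempty)
    {p : ℝ} {z dz : ℝ → E n} (h : InE n p z dz) :
    0 ≤ ∫ t in (0:ℝ)..(2 * π), suppFn n S (dz t) := by
  obtain ⟨h1, h2, h3, -⟩ := h
  obtain ⟨a, ha⟩ := hne
  have h0 : ∫ t in (0:ℝ)..(2 * π), dz t = 0 := by
    have e1 := h3 (2 * π)
    have e2 := h1 0
    rw [zero_add] at e2
    rw [e2] at e1
    simpa using e1
  have h7 : ∫ t in (0:ℝ)..(2 * π), ⟪a, dz t⟫_ℝ = 0 := by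
    have := (innerSL ℝ a).intervalIntegral_comp_comm (h2 0 (2 * π))
    simp only [innerSL_apply_apply] at this
    rw [this, h0, inner_zero_right]
  have hi : IntervalIntegrable (fun t => ⟪a, dz t⟫_ℝ) volume 0 (2 * π) :=
    ⟨(h2 0 (2 * π)).1.const_inner a, (h2 0 (2 * π)).2.const_inner a⟩
  refine h7.symm.le.trans ?_
  exact intervalIntegral.integral_mono_on (by positivity) hi
    (suppFn_integrable hS ⟨a, ha⟩ (h2 _ _)) fun t _ => le_suppFn hS _ ha

theorem capacity_le_of_half {n : ℕ} {A B : Set (E n)} (hA : IsCompact A) (hAne : A.Nonempty)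
    (hB : IsCompact B)
    (hAB : ∀ a ∈ A, ∀ b ∈ A, (1 / 2 : ℝ) • (a - b) ∈ B) :
    capacity n A ≤ capacity n B := by
  have hBne : B.Nonempty := by
    obtain ⟨a, ha⟩ := hAne
    exact ⟨_, hAB a ha a ha⟩
  have hs : ∀ u, suppFn n A u + suppFn n A (-u) ≤ 2 * suppFn n B u := by
    intro u
    have : suppFn n A u ≤ 2 * suppFn n B u - suppFn n A (-u) := by
      refine suppFn_le hAne u fun a ha => ?_
      have : suppFn n A (-u) ≤ 2 * suppFn n B u - ⟪a, u⟫_ℝ := by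
        refine suppFn_le hAne _ fun b hb => ?_
        have := le_suppFn hB u (hAB a ha b hb)
        rw [inner_smul_left, inner_sub_left] at this
        rw [inner_neg_right]
        simp at this
        linarith
      linarith
    linarith
  have hpi : (0:ℝ) ≤ 1 / (2 * π) := by positivity
  have hlb : ∀ r ∈ { r : ℝ | ∃ z dz : ℝ → E n, InE n 2 z dz ∧
      r = (1 / (2 * π)) * ∫ t in (0:ℝ)..(2 * π), suppFn n A (dz t) }, 0 ≤ r := by
    rintro r ⟨z, dz, h, rfl⟩
    exact mul_nonneg hpi (integral_suppFn_nonneg hA hAne h)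
  unfold capacity
  refine pow_le_pow_left₀ (mul_nonneg pi_pos.le (Real.sInf_nonneg hlb)) ?_ 2
  refine mul_le_mul_of_nonneg_left ?_ pi_pos.le
  by_cases hE : ∃ z dz : ℝ → E n, InE n 2 z dz
  · obtain ⟨z₀, dz₀, h₀⟩ := hE
    refine le_csInf ⟨_, z₀, dz₀, h₀, rfl⟩ ?_
    rintro r ⟨z, dz, h, rfl⟩
    have e1 := csInf_le ⟨0, hlb⟩ ⟨z, dz, h, rfl⟩
    have e2 := csInf_le ⟨0, hlb⟩ ⟨_, _, InE_neg h, rfl⟩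
    have hi := h.2.1 0 (2 * π)
    have hi' : IntervalIntegrable (fun t => -dz t) volume 0 (2 * π) := hi.neg
    have e3 : (∫ t in (0:ℝ)..(2 * π), suppFn n A (dz t)) +
        (∫ t in (0:ℝ)..(2 * π), suppFn n A (-dz t)) ≤
        2 * ∫ t in (0:ℝ)..(2 * π), suppFn n B (dz t) := by
      rw [← intervalIntegral.integral_add (suppFn_integrable hA hAne hi)
        (suppFn_integrable hA hAne hi'), ← intervalIntegral.integral_const_mul]
      exact intervalIntegral.integral_mono_on (by positivity)
        ((suppFn_integrable hA hAne hi).add (suppFn_integrable hA hAne hi'))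
        ((suppFn_integrable hB hBne hi).const_mul 2) fun t _ => hs _
    have e4 := mul_le_mul_of_nonneg_left e3 hpi
    linarith
  · have : ∀ S : Set (E n), { r : ℝ | ∃ z dz : ℝ → E n, InE n 2 z dz ∧
      r = (1 / (2 * π)) * ∫ t in (0:ℝ)..(2 * π), suppFn n S (dz t) } = ∅ := by
      intro S
      ext r
      simp only [mem_ofPred_eq, mem_empty_iff_false, iff_false]
      rintro ⟨z, dz, h, -⟩
      exact hE ⟨z, dz, h⟩
    rw [this A, this B]

/-- For centrally symmetric convex bodies `K, T`, `c(K ∩ (x+T)) ≤ c(K ∩ T)`. -/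
theorem capacity_inter_translate_le (n : ℕ) (K T : Set (E n))
    (hK : IsConvexBody n K) (hT : IsConvexBody n T)
    (hKsym : K = -K) (hTsym : T = -T) (x : E n)
    (hne : (interior (K ∩ ((fun y => x + y) '' T))).Nonempty) :
    (interior (K ∩ T)).Nonempty ∧
      capacity n (K ∩ ((fun y => x + y) '' T)) ≤ capacity n (K ∩ T) := by
  have hneg : ∀ {S : Set (E n)}, S = -S → ∀ {y}, y ∈ S → -y ∈ S := by
    intro S hS y hy
    rw [hS]
    simpa using hy
  have hhalf : ∀ {S : Set (E n)}, Convex ℝ S → S = -S → ∀ {a b}, a ∈ S → b ∈ S →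
      (1 / 2 : ℝ) • (a - b) ∈ S := by
    intro S hc hS a b ha hb
    have := hc ha (hneg hS hb) (by norm_num : (0:ℝ) ≤ 1 / 2) (by norm_num : (0:ℝ) ≤ 1 / 2)
      (by norm_num)
    rwa [← smul_add, ← sub_eq_add_neg] at this
  have hAB : ∀ a ∈ K ∩ ((fun y => x + y) '' T), ∀ b ∈ K ∩ ((fun y => x + y) '' T),
      (1 / 2 : ℝ) • (a - b) ∈ K ∩ T := by
    rintro a ⟨haK, a', haT, rfl⟩ b ⟨hbK, b', hbT, rfl⟩
    refine ⟨hhalf hK.2.1 hKsym haK hbK, ?_⟩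
    have := hhalf hT.2.1 hTsym haT hbT
    simpa using this
  refine ⟨?_, capacity_le_of_half ?_ (hne.mono interior_subset) (hK.1.inter hT.1) hAB⟩
  · obtain ⟨y, hy⟩ := hne
    refine ⟨0, mem_interior.2 ⟨(fun w : E n => (2:ℝ) • w + y) ⁻¹'
      interior (K ∩ ((fun y => x + y) '' T)), ?_, isOpen_interior.preimage (by fun_prop), ?_⟩⟩
    · intro w hw
      have := hAB _ (interior_subset hw) _ (interior_subset hy)
      simpa [smul_smul] using this
    · simpa using hy
  · exact hK.1.inter (hT.1.image (by fun_prop))
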